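/- For every integer N ≥ 2, 𝔼 V_{ℰ²,N} = 1 − (2N/(3π^N)) ∫₀^π (t + sin t)^{N−1} (1 + cos t)² dt, where ℰ² is an ellipse (e.g. the closed unit disc in ℝ²). In particular, 𝔼 V_{ℰ²,2} = 16/(9π²) and 𝔼 V_{ℰ²,3} = 35/(12π²). -/

import Mathlib

open MeasureTheory Set

noncomputable section

variable {E : Type*} [NormedAddCommGroup E] [InnerProductSpace ℝ E]
open scoped Real

/-- A symmetric convex body: a compact convex set with nonempty interior with `K = -K`. -/
def IsSymConvexBody (K : Set E) : Prop :=
  IsCompact K ∧ Convex ℝ K ∧ (interior K).Nonempty ∧ K = -K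

/-- `momentU n N K p = 𝔼 U_{K,N}^p`, the `p`-th moment of the normalized volume of the
convex hull of `N` independent uniform random points in `K ⊆ ℝⁿ`. -/
def momentU (n N : ℕ) (K : Set (EuclideanSpace ℝ (Fin n))) (p : ℝ) : ℝ :=
  (∫ x : Fin N → EuclideanSpace ℝ (Fin n) in {x | ∀ i, x i ∈ K},
      ((volume (convexHull ℝ (Set.range x))).toReal / (volume K).toReal) ^ p) /
    (volume K).toReal ^ N

/-- `momentV n N K p = 𝔼 V_{K,N}^p`, the `p`-th moment of the normalized volume of the
symmetric convex hull `conv{±x₁, …, ±x_N}` of `N` independent uniform random points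
in `K ⊆ ℝⁿ`. -/
def momentV (n N : ℕ) (K : Set (EuclideanSpace ℝ (Fin n))) (p : ℝ) : ℝ :=
  (∫ x : Fin N → EuclideanSpace ℝ (Fin n) in {x | ∀ i, x i ∈ K},
      ((volume (convexHull ℝ (Set.range x ∪ -Set.range x))).toReal / (volume K).toReal) ^ p) /
    (volume K).toReal ^ N

open scoped ComplexConjugate


/-- upper endpoint -/
def rr (q : ℂ) : ℝ := if 0 < q.im then (1 - q.re) / q.im else (1 + q.re) / (-q.im)

lemma le_rr {q : ℂ} (hq : q.im ≠ 0) {τ : ℝ} (h : |q.re + τ * q.im| ≤ 1) : τ ≤ rr q := by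
  rw [abs_le] at h
  unfold rr
  split_ifs with h0
  · rw [le_div_iff₀ h0]; linarith
  · have : 0 < -q.im := by
      rcases lt_or_gt_of_ne hq with h1 | h1
      · linarith
      · exact absurd h1 h0
    rw [le_div_iff₀ this]; linarith

lemma good_of_between {q : ℂ} (hq : q.im ≠ 0) {τ σ : ℝ} (h : |q.re + τ * q.im| ≤ 1)
    (h1 : τ ≤ σ) (h2 : σ ≤ rr q) : |q.re + σ * q.im| ≤ 1 := by
  rw [abs_le] at h ⊢
  unfold rr at h2
  split_ifs at h2 with h0
  · rw [le_div_iff₀ h0] at h2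
    have := mul_le_mul_of_nonneg_right h1 h0.le
    constructor <;> linarith
  · have h3 : 0 < -q.im := by
      rcases lt_or_gt_of_ne hq with h1 | h1
      · linarith
      · exact absurd h1 h0
    rw [le_div_iff₀ h3] at h2
    have := mul_le_mul_of_nonneg_right h1 h3.le
    constructor <;> linarith

lemma good_self {q : ℂ} (hq : q.im ≠ 0) : |q.re + rr q * q.im| ≤ 1 := by
  unfold rr
  split_ifs with h0
  · rw [div_mul_cancel₀ _ hq]; simp
  · have : (1 + q.re) / (-q.im) * q.im = -(1 + q.re) := by field_simp
    rw [this]; ring_nf; simp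

open Classical in
lemma comb_sum {N : ℕ} (hN : 0 < N) (p : Fin N → ℂ) (him : ∀ j, (p j).im ≠ 0)
    (hinj : ∀ i j, i ≠ j → rr (p i) ≠ rr (p j)) :
    (∑ i, if (∀ j, |(p j).re + rr (p i) * (p j).im| ≤ 1) then (1 : ENNReal) else 0)
      = if (∃ τ : ℝ, ∀ j, |(p j).re + τ * (p j).im| ≤ 1) then 1 else 0 := by
  split_ifs with h
  · obtain ⟨τ, hτ⟩ := h
    have : Nonempty (Fin N) := ⟨⟨0, hN⟩⟩
    obtain ⟨i, hi⟩ := Finite.exists_min (fun i => rr (p i))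
    rw [Finset.sum_eq_single i]
    · rw [if_pos]
      intro j
      exact good_of_between (him j) (hτ j) (le_rr (him i) (hτ i)) (hi j)
    · intro k _ hk
      rw [if_neg]
      intro hall
      exact hinj k i hk (le_antisymm (le_rr (him i) (hall i)) (hi k))
    · simp
  · apply Finset.sum_eq_zero
    intro i _
    rw [if_neg]
    intro hall
    exact h ⟨_, hall⟩

/-- symmetric hull -/
def PP {N : ℕ} (x : Fin N → ℂ) : Set ℂ := convexHull ℝ (Set.range x ∪ -Set.range x)

lemma PP_compact {N : ℕ} (x : Fin N → ℂ) : IsCompact (PP x) := by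
  apply Set.Finite.isCompact_convexHull
  exact (Set.finite_range x).union ((Set.finite_range x).neg)

lemma feasible_of_notMem {N : ℕ} (hN : 0 < N) (x : Fin N → ℂ) (y : ℂ) (hy : y ≠ 0)
    (h : y ∉ PP x) : ∃ τ : ℝ, ∀ j, |(x j / y).re + τ * (x j / y).im| ≤ 1 := by
  obtain ⟨f, u, hf, hu⟩ := geometric_hahn_banach_closed_point (convex_convexHull ℝ _)
    (PP_compact x).isClosed h
  have h1 : ∀ j, f (x j) < u := fun j => hf _ (subset_convexHull _ _ (Or.inl ⟨j, rfl⟩))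
  have h2 : ∀ j, -f (x j) < u := fun j => by
    rw [← map_neg]
    exact hf _ (subset_convexHull _ _ (Or.inr ⟨j, by simp⟩))
  have hu0 : 0 < u := by linarith [h1 ⟨0, hN⟩, h2 ⟨0, hN⟩]
  have hfy : 0 < f y := hu0.trans hu
  refine ⟨f (y * Complex.I) / f y, fun j => ?_⟩
  have key : f (x j) = (x j / y).re * f y + (x j / y).im * f (y * Complex.I) := by
    have : x j = (x j / y).re • y + (x j / y).im • (y * Complex.I) := by
      have h3 : x j = (x j / y) * y := by field_simp
      conv_lhs => rw [h3, ← Complex.re_add_im (x j / y)]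
      simp only [Complex.real_smul]; ring
    conv_lhs => rw [this]
    simp only [map_add, map_smul, smul_eq_mul]
  have : (x j / y).re + f (y * Complex.I) / f y * (x j / y).im = f (x j) / f y := by
    rw [key]; field_simp
  rw [this, abs_div, abs_of_pos hfy, div_le_one hfy, abs_le]
  constructor <;> linarith [h1 j, h2 j]

lemma not_feasible_of_interior {N : ℕ} (x : Fin N → ℂ) (y : ℂ) (hy : y ≠ 0)
    (h : y ∈ interior (PP x)) : ¬ ∃ τ : ℝ, ∀ j, |(x j / y).re + τ * (x j / y).im| ≤ 1 := by
  rintro ⟨τ, hτ⟩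
  have hsub : PP x ⊆ {w : ℂ | (w / y).re + τ * (w / y).im ≤ 1} := by
    apply convexHull_min
    · rintro w (⟨j, rfl⟩ | ⟨j, hj⟩)
      · exact (abs_le.1 (hτ j)).2
      · have : w = - x j := by rw [hj]; simp
        subst this
        have := (abs_le.1 (hτ j)).1
        simp only [mem_setOf_eq, neg_div, Complex.neg_re, Complex.neg_im]
        linarith
    · apply convex_halfSpace_le
      constructor
      · intro a b; simp only [add_div, Complex.add_re, Complex.add_im]; ring
      · intro c a
        simp only [Complex.real_smul, mul_div_assoc, Complex.re_ofReal_mul, Complex.im_ofReal_mul,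
          smul_eq_mul]; ring
  have hc : Filter.Tendsto (fun t : ℝ => ((1 + t : ℝ) : ℂ) * y) (nhdsWithin 0 (Ioi 0)) (nhds y) := by
    have : Continuous (fun t : ℝ => ((1 + t : ℝ) : ℂ) * y) := by fun_prop
    have h2 := (this.tendsto 0).mono_left (nhdsWithin_le_nhds (s := Ioi 0))
    simpa using h2
  have h3 := hc.eventually (mem_interior_iff_mem_nhds.1 h)
  obtain ⟨t, ht1, ht2⟩ := (h3.and self_mem_nhdsWithin).exists
  have h4 := hsub ht1
  have h5 : ((1 + t : ℝ) : ℂ) * y / y = ((1 + t : ℝ) : ℂ) := by field_simp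
  simp only [mem_setOf_eq, h5, Complex.ofReal_re, Complex.ofReal_im] at h4
  have : 0 < t := ht2
  linarith


lemma null_line {c : ℂ} (hc : c ≠ 0) : volume {v : ℂ | (conj c * v).im = 0} = 0 := by
  let L : ℂ →ₗ[ℝ] ℝ := Complex.imLm ∘ₗ (LinearMap.mulLeft ℝ (conj c))
  have : {v : ℂ | (conj c * v).im = 0} = (LinearMap.ker L : Submodule ℝ ℂ) := by
    ext v; simp [L]
  rw [this]
  apply Measure.addHaar_submodule
  intro h
  have h1 : Complex.I * c ∈ LinearMap.ker L := by rw [h]; trivial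
  simp only [LinearMap.mem_ker, L, LinearMap.comp_apply, LinearMap.mulLeft_apply] at h1
  have h2 : (conj c * (Complex.I * c)) = ((Complex.normSq c : ℝ) : ℂ) * Complex.I := by
    rw [Complex.normSq_eq_conj_mul_self]; ring
  rw [h2] at h1
  simp at h1
  exact hc h1

lemma ae_line {c : ℂ} (hc : c ≠ 0) (a : ℂ) : ∀ᵐ y : ℂ, (conj c * (a - y)).im ≠ 0 := by
  have := (Measure.measurePreserving_sub_left (volume : Measure ℂ) a).quasiMeasurePreserving.preimage_null
    (null_line hc)
  rw [ae_iff]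
  simpa using this

lemma ae_ne {N : ℕ} {i j : Fin N} (hij : i ≠ j) (s : ℝ) :
    ∀ᵐ x : Fin N → ℂ, x i ≠ s * x j := by
  let L : (Fin N → ℂ) →ₗ[ℝ] ℂ := LinearMap.proj i - s • LinearMap.proj j
  have h0 : volume ((LinearMap.ker L : Submodule ℝ (Fin N → ℂ)) : Set (Fin N → ℂ)) = 0 := by
    apply Measure.addHaar_submodule
    intro h
    have h1 : (Pi.single i (1 : ℂ)) ∈ LinearMap.ker L := by rw [h]; trivial
    simp [L, hij.symm] at h1
  rw [ae_iff]
  convert h0 using 2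
  ext x; simp [L, sub_eq_zero]

lemma ae_ne_zero {N : ℕ} (i : Fin N) :
    ∀ᵐ x : Fin N → ℂ, x i ≠ 0 := by
  let L : (Fin N → ℂ) →ₗ[ℝ] ℂ := LinearMap.proj i 
  have h0 : volume ((LinearMap.ker L : Submodule ℝ (Fin N → ℂ)) : Set (Fin N → ℂ)) = 0 := by
    apply Measure.addHaar_submodule
    intro h
    have h1 : (Pi.single i (1 : ℂ)) ∈ LinearMap.ker L := by rw [h]; trivial
    simp [L] at h1
  rw [ae_iff]
  convert h0 using 2
  ext x; simp [L]

lemma ae_im {x : ℂ} (hx : x ≠ 0) : ∀ᵐ y : ℂ, (x / y).im ≠ 0 := by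
  filter_upwards [ae_line hx 0, Measure.ae_ne volume (0:ℂ)] with y hy hy0 h
  apply hy
  simp only [zero_sub, mul_neg, Complex.neg_im, neg_eq_zero]
  rw [Complex.div_im] at h
  simp only [Complex.mul_im, Complex.conj_re, Complex.conj_im]
  have : Complex.normSq y ≠ 0 := by simpa using hy0
  field_simp at h
  linarith

/-- sign of a boolean -/
def sg (s : Bool) : ℝ := if s then 1 else -1

lemma sg_rr {q : ℂ} (hq : q.im ≠ 0) : ∃ s, sg s * (q.re + rr q * q.im) = 1 := by
  unfold rr
  split_ifs with h0
  · use true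
    rw [div_mul_cancel₀ _ hq]; simp [sg]
  · use false
    have : (1 + q.re) / (-q.im) * q.im = -(1 + q.re) := by field_simp
    rw [this]; simp [sg]

lemma ae_inj {N : ℕ} {x : Fin N → ℂ} (h : ∀ i j, i ≠ j → ∀ s t, sg s * x i ≠ sg t * x j) 
    (hx : ∀ i, x i ≠ 0) :
    ∀ᵐ y : ℂ, ∀ i j, i ≠ j → rr (x i / y) ≠ rr (x j / y) := by
  have h1 : ∀ᵐ y : ℂ, ∀ i j, i ≠ j → ∀ s t, (conj (sg s * x i - sg t * x j) * (sg s * x i - y)).im ≠ 0 := by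
    simp only [ae_all_iff]
    intro i j hij s t
    exact ae_line (sub_ne_zero.2 (h i j hij s t)) _
  have h2 : ∀ᵐ y : ℂ, ∀ i, (x i / y).im ≠ 0 := ae_all_iff.2 fun i => ae_im (hx i)
  filter_upwards [h1, h2, Measure.ae_ne volume (0:ℂ)] with y h1 h2 hy i j hij heq
  obtain ⟨s, hs⟩ := sg_rr (h2 i)
  obtain ⟨t, ht⟩ := sg_rr (h2 j)
  apply h1 i j hij s t
  rw [← heq] at ht
  set ρ := rr (x i / y)
  obtain ⟨p, hp⟩ : ∃ p, p = x i / y := ⟨_, rfl⟩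
  obtain ⟨q, hq⟩ : ∃ q, q = x j / y := ⟨_, rfl⟩
  have hp' : x i = p * y := by rw [hp]; field_simp
  have hq' : x j = q * y := by rw [hq]; field_simp
  rw [← hp] at hs
  rw [← hq] at ht
  rw [hp', hq']
  have e : (conj (sg s * (p * y) - sg t * (q * y)) * (sg s * (p * y) - y)) =
      ((Complex.normSq y : ℝ) : ℂ) * (conj (sg s * p - sg t * q) * (sg s * p - 1)) := by
    rw [Complex.normSq_eq_conj_mul_self]
    simp only [map_sub, map_mul]; ring
  rw [e, Complex.im_ofReal_mul]
  apply mul_eq_zero_of_right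
  simp only [map_sub, map_mul, Complex.conj_ofReal, Complex.mul_im, Complex.sub_re, Complex.sub_im,
    Complex.mul_re, Complex.ofReal_re, Complex.ofReal_im, Complex.conj_re, Complex.conj_im,
    Complex.one_re, Complex.one_im]
  have e1 : sg s * p.re = 1 - ρ * (sg s * p.im) := by linarith
  have e2 : sg t * q.re = 1 - ρ * (sg t * q.im) := by linarith
  simp only [zero_mul, sub_zero, add_zero, mul_neg, sub_neg_eq_add]
  rw [e1, e2]; ring

lemma ae_generic (N : ℕ) : ∀ᵐ x : Fin N → ℂ, ∀ᵐ y : ℂ, y ≠ 0 ∧ (∀ j, (x j / y).im ≠ 0) ∧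
    (∀ i j, i ≠ j → rr (x i / y) ≠ rr (x j / y)) := by
  have h1 : ∀ᵐ x : Fin N → ℂ, ∀ i j, i ≠ j → ∀ s t, (sg s : ℂ) * x i ≠ sg t * x j := by
    simp only [ae_all_iff]
    intro i j hij s t
    filter_upwards [ae_ne hij (sg s * sg t)] with x hx h
    apply hx
    have : (sg s : ℂ) * sg s = 1 := by cases s <;> simp [sg]
    push_cast
    rw [mul_assoc, ← h, ← mul_assoc, this, one_mul]
  filter_upwards [h1, ae_all_iff.2 (fun i : Fin N => ae_ne_zero i)] with x hx1 hx2
  filter_upwards [ae_inj hx1 hx2, Measure.ae_ne volume (0:ℂ), ae_all_iff.2 fun i => ae_im (hx2 i)]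
    with y h1 h2 h3
  exact ⟨h2, h3, h1⟩

/-- event -/
def BB {N : ℕ} (i : Fin N) : Set ((Fin N → ℂ) × ℂ) :=
  {z | ∀ j, |(z.1 j / z.2).re + rr (z.1 i / z.2) * (z.1 j / z.2).im| ≤ 1}

lemma measurable_rr : Measurable rr := by
  unfold rr
  apply Measurable.ite
  · exact measurableSet_lt measurable_const Complex.measurable_im
  · fun_prop
  · fun_prop

lemma measurableSet_BB {N : ℕ} (i : Fin N) : MeasurableSet (BB i) := by
  unfold BB
  rw [setOf_forall]
  refine MeasurableSet.iInter fun j => measurableSet_le ?_ measurable_const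
  have h1 : ∀ k, Measurable fun z : (Fin N → ℂ) × ℂ => z.1 k / z.2 := by intro k; fun_prop
  have h2 := measurable_rr.comp (h1 i)
  have h3 := Complex.measurable_re.comp (h1 j)
  have h4 := Complex.measurable_im.comp (h1 j)
  exact (h3.add (h2.mul h4)).abs

/-- disc -/
def DD : Set ℂ := Metric.closedBall 0 1

lemma ae_indicator {N : ℕ} (hN : 0 < N) : ∀ᵐ x : Fin N → ℂ,
    volume (DD \ PP x) = ∑ i, ∫⁻ y in DD, (BB i).indicator 1 (x, y) := by
  filter_upwards [ae_generic N] with x hx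
  have hm : MeasurableSet (PP x) := (PP_compact x).measurableSet
  have hfr : ∀ᵐ y : ℂ, y ∉ frontier (PP x) :=
    measure_eq_zero_iff_ae_notMem.1 ((convex_convexHull ℝ _).addHaar_frontier volume)
  have : volume (DD \ PP x) = ∫⁻ y in DD, (PP x)ᶜ.indicator 1 y := by
    rw [lintegral_indicator_one hm.compl, Measure.restrict_apply hm.compl, inter_comm]; rfl
  rw [this, ← lintegral_finsetSum]
  · apply lintegral_congr_ae
    apply ae_restrict_of_ae
    filter_upwards [hx, hfr] with y ⟨hy0, h1, h2⟩ hf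
    have := comb_sum hN (fun j => x j / y) h1 h2
    classical
    simp only [indicator, BB, mem_setOf_eq, Pi.one_apply, mem_compl_iff]
    convert this.symm using 1
    have hiff : y ∉ PP x ↔ ∃ τ : ℝ, ∀ j, |(x j / y).re + τ * (x j / y).im| ≤ 1 := by
      constructor
      · exact feasible_of_notMem hN x y hy0
      · intro h hP
        by_cases hi : y ∈ interior (PP x)
        · exact not_feasible_of_interior x y hy0 hi h
        · exact hf ⟨subset_closure hP, hi⟩
    simp only [hiff]
  · intro i _
    exact (measurable_one.indicator (measurableSet_BB i)).comp measurable_prodMk_left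


/-- strip area -/
def SS (h : ℝ) : ENNReal := volume {w : ℂ | w ∈ DD ∧ |w.im| ≤ h}

lemma measurable_SS : Measurable SS := by
  apply Monotone.measurable
  intro a b hab
  exact measure_mono fun w hw => ⟨hw.1, hw.2.trans hab⟩

/-- strip -/
def AA (y : ℂ) (ρ : ℝ) : Set ℂ := {w : ℂ | w ∈ DD ∧ |(w / y).re + ρ * (w / y).im| ≤ 1}

lemma mp_mul {u : ℂ} (hu : ‖u‖ = 1) : MeasurePreserving (fun w : ℂ => u * w) volume volume := by
  have := (rotation (⟨u, by simp [Submonoid.unitSphere, hu]⟩ : Circle)).measurePreserving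
  exact this

lemma measurableEmbedding_mul {u : ℂ} (hu : ‖u‖ = 1) : MeasurableEmbedding (fun w : ℂ => u * w) := by
  have : u ≠ 0 := by rintro rfl; simp at hu
  exact measurableEmbedding_mulLeft₀ this

lemma volume_AA {y : ℂ} (hy : y ≠ 0) (ρ : ℝ) :
    volume (AA y ρ) = SS (‖y‖ / ‖1 - ρ * Complex.I‖) := by
  set c : ℂ := (1 - ρ * Complex.I) / y with hc
  have h1 : (1 - ρ * Complex.I : ℂ) ≠ 0 := by
    intro h
    have := congrArg Complex.re h
    simp at this
  have hc0 : c ≠ 0 := div_ne_zero h1 hy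
  have hcn : 0 < ‖c‖ := norm_pos_iff.2 hc0
  have hu : ‖Complex.I * c / ‖c‖‖ = 1 := by
    simp [hcn.ne']
  rw [SS, ← (mp_mul hu).measure_preimage_emb (measurableEmbedding_mul hu) {w : ℂ | w ∈ DD ∧ |w.im| ≤ _}]
  congr 1
  ext w
  simp only [AA, DD, mem_setOf_eq, mem_preimage, mem_closedBall_zero_iff, norm_mul, hu, one_mul]
  have e1 : (Complex.I * c / ‖c‖ * w).im = ((w / y).re + ρ * (w / y).im) / ‖c‖ := by
    have : Complex.I * c / ‖c‖ * w = (((1 / ‖c‖ : ℝ)) : ℂ) * (Complex.I * ((1 - ρ * Complex.I) * (w / y))) := by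
      rw [hc]; push_cast; ring
    rw [this, Complex.im_ofReal_mul]
    simp
    ring
  have e2 : ‖y‖ / ‖1 - ρ * Complex.I‖ = 1 / ‖c‖ := by
    rw [hc, norm_div]; field_simp
  rw [e1, e2, abs_div, abs_of_pos hcn, div_le_div_iff_of_pos_right hcn]

/-- distance -/
def hh (y a : ℂ) : ℝ := |(conj y * a).im| / ‖a - y‖

lemma measurable_hh : Measurable (fun z : ℂ × ℂ => hh z.1 z.2) := by
  unfold hh
  have h1 : Measurable fun z : ℂ × ℂ => (conj z.1 * z.2).im := by
    apply Continuous.measurable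
    fun_prop
  have h2 : Measurable fun z : ℂ × ℂ => ‖z.2 - z.1‖ := by fun_prop
  exact h1.abs.div h2

lemma hh_symm (y a : ℂ) : hh a y = hh y a := by
  unfold hh
  rw [norm_sub_rev]
  congr 1
  simp only [Complex.mul_im, Complex.conj_re, Complex.conj_im]
  rw [← abs_neg]; congr 1; ring

lemma conj_im_eq {y : ℂ} (hy : y ≠ 0) (a : ℂ) : (conj y * a).im = ‖y‖ ^ 2 * (a / y).im := by
  have : conj y * a = ((‖y‖ ^ 2 : ℝ) : ℂ) * (a / y) := by
    rw [← Complex.normSq_eq_norm_sq, Complex.normSq_eq_conj_mul_self]; field_simp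
  rw [this, Complex.im_ofReal_mul]

lemma volume_AA_pos {y a : ℂ} (hy : y ≠ 0) (h : 0 < (a / y).im) :
    volume (AA y (rr (a / y))) = SS (hh y a) := by
  rw [volume_AA hy]
  congr 1
  unfold hh
  rw [conj_im_eq hy]
  obtain ⟨q, hq⟩ : ∃ q, q = a / y := ⟨_, rfl⟩
  have hq' : a = q * y := by rw [hq]; field_simp
  rw [← hq] at h ⊢
  have hyn : 0 < ‖y‖ := norm_pos_iff.2 hy
  have hq1 : q - 1 ≠ 0 := by
    intro h0
    have := congrArg Complex.im h0
    simp at this; linarith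
  have hqn : 0 < ‖q - 1‖ := norm_pos_iff.2 hq1
  have e1 : ‖a - y‖ = ‖q - 1‖ * ‖y‖ := by rw [hq', ← norm_mul]; congr 1; ring
  have e2 : ‖1 - (rr q : ℂ) * Complex.I‖ = ‖q - 1‖ / q.im := by
    have : 1 - (rr q : ℂ) * Complex.I = Complex.I * conj (q - 1) / (q.im : ℂ) := by
      unfold rr
      rw [if_pos h]
      have hne : (q.im : ℂ) ≠ 0 := by exact_mod_cast h.ne'
      field_simp
      apply Complex.ext <;> simp
      field_simp
      ring
    rw [this]
    simp only [norm_mul, norm_div, Complex.norm_I, one_mul, RCLike.norm_conj, Complex.norm_real, Real.norm_eq_abs, abs_of_pos h]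
  rw [e1, e2, abs_of_pos (by positivity)]
  field_simp

lemma rr_neg {q : ℂ} (h : q.im ≠ 0) : rr (-q) = rr q := by
  unfold rr
  rcases lt_or_gt_of_ne h with h | h
  · rw [if_pos (by simpa using h), if_neg (by linarith)]; simp
  · rw [if_neg (by simp; linarith), if_pos h]; simp; ring

lemma volume_AA_neg {y a : ℂ} (hy : y ≠ 0) (h : (a / y).im < 0) :
    volume (AA y (rr (a / y))) = SS (hh y (-a)) := by
  rw [← rr_neg h.ne, ← neg_div]
  apply volume_AA_pos hy
  rw [neg_div]; simpa using h

lemma measurableSet_DD : MeasurableSet DD := Metric.isClosed_closedBall.measurableSet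

lemma ae_im' {y : ℂ} (hy : y ≠ 0) : ∀ᵐ a : ℂ, (a / y).im ≠ 0 := by
  filter_upwards [ae_line hy 0] with a ha h
  apply ha
  rw [zero_sub, mul_neg, Complex.neg_im, conj_im_eq hy, h]; simp

/-- cube -/
def DN (N : ℕ) : Set (Fin N → ℂ) := {x | ∀ i, x i ∈ DD}

lemma measurableSet_DN (N : ℕ) : MeasurableSet (DN N) := by
  have : DN N = Set.univ.pi fun _ => DD := by ext; simp [DN]
  rw [this]
  exact MeasurableSet.univ_pi fun _ => measurableSet_DD

lemma slice_volume {M : ℕ} (i : Fin (M + 1)) {y : ℂ} (hy : y ≠ 0) :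
    volume {x : Fin (M + 1) → ℂ | x ∈ DN (M + 1) ∧ (x, y) ∈ BB i} =
      ∫⁻ a in DD, volume (AA y (rr (a / y))) ^ M := by
  have hB : MeasurableSet {x : Fin (M + 1) → ℂ | x ∈ DN (M + 1) ∧ (x, y) ∈ BB i} :=
    (measurableSet_DN _).inter (measurable_prodMk_right (measurableSet_BB i))
  let e := MeasurableEquiv.piFinSuccAbove (fun _ : Fin (M + 1) => ℂ) i
  have he : MeasurePreserving e volume volume := volume_preserving_piFinSuccAbove (fun _ => ℂ) i
  rw [← (he.symm e).measure_preimage_equiv, Measure.volume_eq_prod, Measure.prod_apply (e.symm.measurable hB),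
    ← lintegral_indicator measurableSet_DD]
  apply lintegral_congr_ae
  filter_upwards [ae_im' hy] with a ha
  by_cases haD : a ∈ DD
  · rw [indicator_of_mem haD]
    have : Prod.mk a ⁻¹' (e.symm ⁻¹' {x : Fin (M + 1) → ℂ | x ∈ DN (M + 1) ∧ (x, y) ∈ BB i}) =
        Set.univ.pi fun _ : Fin M => AA y (rr (a / y)) := by
      ext x'
      have hes : e.symm (a, x') = i.insertNth a x' := rfl
      simp only [mem_preimage, hes, mem_setOf_eq, DN, BB, AA, mem_pi, mem_univ, forall_true_left]
      rw [Fin.forall_iff_succAbove i, Fin.forall_iff_succAbove i]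
      simp only [Fin.insertNth_apply_same, Fin.insertNth_apply_succAbove]
      constructor
      · rintro ⟨⟨_, h1⟩, _, h2⟩ j
        exact ⟨h1 j, h2 j⟩
      · intro h
        exact ⟨⟨haD, fun j => (h j).1⟩, good_self ha, fun j => (h j).2⟩
    rw [this, volume_pi_pi]; simp
  · rw [indicator_of_notMem haD]
    have : Prod.mk a ⁻¹' (e.symm ⁻¹' {x : Fin (M + 1) → ℂ | x ∈ DN (M + 1) ∧ (x, y) ∈ BB i}) = ∅ := by
      ext x'
      have hes : e.symm (a, x') = i.insertNth a x' := rfl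
      simp only [mem_preimage, hes, mem_setOf_eq, DN, mem_empty_iff_false, iff_false]
      rintro ⟨h, _⟩
      have := h i
      rw [Fin.insertNth_apply_same] at this
      exact haD this
    rw [this]; simp

lemma total_volume (M : ℕ) :
    ∫⁻ x in DN (M + 1), volume (DD \ PP x) =
      (M + 1 : ℕ) * ∫⁻ y in DD, ∫⁻ a in DD, volume (AA y (rr (a / y))) ^ M := by
  rw [lintegral_congr_ae (ae_restrict_of_ae (ae_indicator (Nat.succ_pos M)))]
  rw [lintegral_finsetSum]
  · have : ∀ i : Fin (M + 1), ∫⁻ x in DN (M + 1), ∫⁻ y in DD, (BB i).indicator 1 (x, y) =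
        ∫⁻ y in DD, ∫⁻ a in DD, volume (AA y (rr (a / y))) ^ M := by
      intro i
      rw [lintegral_lintegral_swap]
      · apply lintegral_congr_ae
        apply ae_restrict_of_ae
        filter_upwards [Measure.ae_ne volume (0:ℂ)] with y hy
        rw [← slice_volume i hy]
        have hm : MeasurableSet {x : Fin (M + 1) → ℂ | (x, y) ∈ BB i} := 
          (measurable_prodMk_right (measurableSet_BB i))
        have : ∀ x : Fin (M + 1) → ℂ, (BB i).indicator (1 : (Fin (M + 1) → ℂ) × ℂ → ENNReal) (x, y) = 
          {x : Fin (M + 1) → ℂ | (x, y) ∈ BB i}.indicator 1 x := fun x => rfl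
        simp_rw [this]
        rw [lintegral_indicator_one hm, Measure.restrict_apply hm, inter_comm]
        rfl
      · exact (measurable_one.indicator (measurableSet_BB i)).aemeasurable
    simp [this]
  · intro i _
    exact (measurable_one.indicator (measurableSet_BB i)).lintegral_prod_right'

lemma symm_step (F : ℝ → ENNReal) (hF : Measurable F) :
    ∫⁻ y in DD, ∫⁻ a in DD, (if 0 < (conj y * a).im then F (hh y a) else F (hh y (-a))) =
    ∫⁻ y in DD, ∫⁻ a in DD, F (hh y a) := by
  have mim : Measurable fun z : ℂ × ℂ => (conj z.1 * z.2).im := by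
    apply Continuous.measurable
    fun_prop
  have mF : Measurable fun z : ℂ × ℂ => F (hh z.1 z.2) := hF.comp measurable_hh
  let P : ℂ × ℂ → ENNReal := fun z => if 0 < (conj z.1 * z.2).im then F (hh z.1 z.2) else 0
  let Q : ℂ × ℂ → ENNReal := fun z => if (conj z.1 * z.2).im < 0 then F (hh z.1 z.2) else 0
  have mP : Measurable P := Measurable.ite (measurableSet_lt measurable_const mim) mF measurable_const
  have mQ : Measurable Q := Measurable.ite (measurableSet_lt mim measurable_const) mF measurable_const
  have hPQ : ∫⁻ y in DD, ∫⁻ a in DD, P (y, a) = ∫⁻ y in DD, ∫⁻ a in DD, Q (y, a) := by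
    rw [lintegral_lintegral_swap mP.aemeasurable]
    apply lintegral_congr; intro y
    apply lintegral_congr; intro a
    have : (conj a * y).im = - (conj y * a).im := by simp; ring
    simp only [P, Q, this, hh_symm y a, Left.neg_pos_iff]
  have hR : ∫⁻ y in DD, ∫⁻ a in DD, F (hh y a) = 
      ∫⁻ y in DD, ((∫⁻ a in DD, P (y, a)) + ∫⁻ a in DD, Q (y, a)) := by
    apply lintegral_congr_ae
    apply ae_restrict_of_ae
    filter_upwards [Measure.ae_ne volume (0:ℂ)] with y hy
    rw [← lintegral_add_left (f := fun a => P (y, a)) (mP.comp measurable_prodMk_left)]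
    apply lintegral_congr_ae
    apply ae_restrict_of_ae
    filter_upwards [ae_im' hy] with a ha
    have h0 : (conj y * a).im ≠ 0 := by
      rw [conj_im_eq hy]
      have := norm_ne_zero_iff.2 hy
      positivity
    simp only [P, Q]
    rcases lt_or_gt_of_ne h0 with h | h
    · rw [if_neg (not_lt.2 h.le), if_pos h, zero_add]
    · rw [if_neg (not_lt.2 h.le), if_pos h, add_zero]
  have hL : ∫⁻ y in DD, ∫⁻ a in DD, (if 0 < (conj y * a).im then F (hh y a) else F (hh y (-a))) = 
      ∫⁻ y in DD, ((∫⁻ a in DD, P (y, a)) + ∫⁻ a in DD, P (y, a)) := by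
    apply lintegral_congr_ae
    apply ae_restrict_of_ae
    filter_upwards [Measure.ae_ne volume (0:ℂ)] with y hy
    have hneg : ∫⁻ a in DD, P (y, a) = ∫⁻ a in DD, P (y, -a) := by
      rw [← lintegral_indicator measurableSet_DD, ← lintegral_indicator measurableSet_DD,
        ← lintegral_neg_eq_self]
      apply lintegral_congr; intro a
      simp [indicator, DD]
    nth_rw 2 [hneg]
    rw [← lintegral_add_left (f := fun a => P (y, a)) (mP.comp measurable_prodMk_left)]
    apply lintegral_congr_ae
    apply ae_restrict_of_ae
    filter_upwards [ae_im' hy] with a ha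
    have h0 : (conj y * a).im ≠ 0 := by
      rw [conj_im_eq hy]
      have := norm_ne_zero_iff.2 hy
      positivity
    simp only [P, mul_neg, Complex.neg_im, Left.neg_pos_iff]
    rcases lt_or_gt_of_ne h0 with h | h
    · rw [if_neg (not_lt.2 h.le), if_pos h, if_neg (not_lt.2 h.le), zero_add]
    · rw [if_neg (not_lt.2 h.le), if_pos h, if_pos h, add_zero]
  rw [hL, hR]
  have mP1 : Measurable fun y => ∫⁻ a in DD, P (y, a) := mP.lintegral_prod_right'
  rw [lintegral_add_left mP1, lintegral_add_left mP1, hPQ]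

lemma total_volume' (M : ℕ) :
    ∫⁻ x in DN (M + 1), volume (DD \ PP x) =
      (M + 1 : ℕ) * ∫⁻ y in DD, ∫⁻ a in DD, SS (hh y a) ^ M := by
  rw [total_volume, ← symm_step (fun h => SS h ^ M) (measurable_SS.pow_const M)]
  congr 1
  apply lintegral_congr_ae
  apply ae_restrict_of_ae
  filter_upwards [Measure.ae_ne volume (0:ℂ)] with y hy
  apply lintegral_congr_ae
  apply ae_restrict_of_ae
  filter_upwards [ae_im' hy] with a ha
  have hyn := norm_pos_iff.2 hy
  rw [conj_im_eq hy]
  rcases lt_or_gt_of_ne ha with h | h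
  · rw [if_neg, volume_AA_neg hy h]
    rw [not_lt]; exact (mul_neg_of_pos_of_neg (by positivity) h).le
  · rw [if_pos (by positivity), volume_AA_pos hy h]


/-- indicator of the disc -/
def ii (y : ℂ) : ENNReal := DD.indicator 1 y

lemma measurable_ii : Measurable ii := measurable_one.indicator measurableSet_DD

lemma ii_mul {u : ℂ} (hu : ‖u‖ = 1) (y : ℂ) : ii (u * y) = ii y := by
  simp [ii, indicator, DD, hu]

lemma setLIntegral_ii (f : ℂ → ENNReal) : ∫⁻ y in DD, f y = ∫⁻ y, ii y * f y := by
  rw [← lintegral_indicator measurableSet_DD]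
  apply lintegral_congr; intro y
  by_cases h : y ∈ DD <;> simp [ii, h]

lemma bp1 (F : ℝ → ENNReal) (hF : Measurable F) :
    ∫⁻ y in DD, ∫⁻ a in DD, F (hh y a) =
      ∫⁻ v : ℂ, ∫⁻ y : ℂ, ii y * (ii (y + v) * F (|(conj y * v).im| / ‖v‖)) := by
  rw [setLIntegral_ii]
  have : ∀ y : ℂ, ii y * ∫⁻ a in DD, F (hh y a) = 
      ∫⁻ v : ℂ, ii y * (ii (y + v) * F (|(conj y * v).im| / ‖v‖)) := by
    intro y
    have h1 : ∀ v : ℂ, (conj y * (y + v)).im = (conj y * v).im := by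
      intro v; simp; ring
    rw [setLIntegral_ii, ← lintegral_add_left_eq_self _ y, ← lintegral_const_mul']
    · simp only [hh, h1, add_sub_cancel_left]
    · simp only [ii, indicator]; split_ifs <;> simp
  simp_rw [this]
  rw [lintegral_lintegral_swap]
  apply Measurable.aemeasurable
  have m1 : Measurable fun z : ℂ × ℂ => |(conj z.1 * z.2).im| / ‖z.2‖ := by
    have : Measurable fun z : ℂ × ℂ => (conj z.1 * z.2).im := by
      apply Continuous.measurable
      fun_prop
    exact this.abs.div (by fun_prop)
  exact (measurable_ii.comp measurable_fst).mul
    ((measurable_ii.comp (measurable_fst.add measurable_snd)).mul (hF.comp m1))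

lemma bp2 (F : ℝ → ENNReal) (r θ : ℝ) (hr : 0 < r) : 
    ∫⁻ y : ℂ, ii y * (ii (y + Complex.polarCoord.symm (r, θ)) * 
      F (|(conj y * Complex.polarCoord.symm (r, θ)).im| / ‖Complex.polarCoord.symm (r, θ)‖)) =
    ∫⁻ y : ℂ, ii y * (ii (y + r) * F |y.im|) := by
  set u : ℂ := Real.cos θ + Real.sin θ * Complex.I with hu
  have hun : ‖u‖ = 1 := by rw [hu]; push_cast; exact Complex.norm_cos_add_sin_mul_I θ
  have e : Complex.polarCoord.symm (r, θ) = u * r := by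
    rw [Complex.polarCoord_symm_apply, mul_comm]
  rw [e, ← (mp_mul hun).lintegral_comp_emb (measurableEmbedding_mul hun)]
  apply lintegral_congr; intro y
  have e1 : u * y + u * r = u * (y + r) := by ring
  have e2 : conj (u * y) * (u * r) = (r : ℂ) * conj y := by
    have : conj u * u = 1 := by
      rw [← Complex.normSq_eq_conj_mul_self, Complex.normSq_eq_norm_sq, hun]; simp
    rw [map_mul]; linear_combination (conj y * r) * this
  rw [e1, ii_mul hun, ii_mul hun, e2, Complex.im_ofReal_mul, norm_mul, hun, Complex.norm_real,
    Real.norm_eq_abs, abs_mul, one_mul, mul_div_assoc, Complex.conj_im, abs_neg]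
  congr 3
  rw [abs_of_pos hr]; field_simp

lemma bp3 (F : ℝ → ENNReal) (hF : Measurable F) :
    ∫⁻ y in DD, ∫⁻ a in DD, F (hh y a) =
      ENNReal.ofReal (2 * π) * ∫⁻ y : ℂ, ii y * (F |y.im| * 
        ∫⁻ r : ℝ in Ioi 0, ENNReal.ofReal r * ii (y + r)) := by
  rw [bp1 F hF, ← Complex.lintegral_comp_polarCoord_symm]
  let G : ℝ → ENNReal := fun r => ∫⁻ y : ℂ, ii y * (ii (y + r) * F |y.im|)
  have mk : Measurable fun z : ℝ × ℂ => ii z.2 * (ii (z.2 + z.1) * F |z.2.im|) := by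
    refine (measurable_ii.comp measurable_snd).mul ((measurable_ii.comp ?_).mul (hF.comp ?_))
    · fun_prop
    · exact (Complex.measurable_im.comp measurable_snd).abs
  have mG : Measurable G := mk.lintegral_prod_right'
  have h1 : ∀ p ∈ polarCoord.target, ENNReal.ofReal p.1 • (∫⁻ y : ℂ, ii y * (ii (y + Complex.polarCoord.symm p) * 
      F (|(conj y * Complex.polarCoord.symm p).im| / ‖Complex.polarCoord.symm p‖))) = ENNReal.ofReal p.1 * G p.1 := by
    rintro ⟨r, θ⟩ hp
    simp only [polarCoord_target, mem_prod, mem_Ioi] at hp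
    rw [bp2 F r θ hp.1, smul_eq_mul]
  rw [setLIntegral_congr_fun polarCoord.open_target.measurableSet h1, polarCoord_target,
    Measure.volume_eq_prod, ← Measure.prod_restrict, lintegral_prod]
  · simp only [lintegral_const, Measure.restrict_apply_univ, Real.volume_Ioo]
    rw [lintegral_mul_const', mul_comm]
    · congr 1
      · congr 1; ring
      · simp only [G]
        have : ∀ r : ℝ, ENNReal.ofReal r * ∫⁻ y : ℂ, ii y * (ii (y + r) * F |y.im|) = 
            ∫⁻ y : ℂ, ENNReal.ofReal r * (ii y * (ii (y + r) * F |y.im|)) := fun r =>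
          (lintegral_const_mul' _ _ ENNReal.ofReal_ne_top).symm
        simp_rw [this]
        rw [lintegral_lintegral_swap]
        · apply lintegral_congr; intro y
          have m1 : Measurable fun r : ℝ => ENNReal.ofReal r * ii (y + r) := by
            refine ENNReal.measurable_ofReal.mul (measurable_ii.comp ?_)
            fun_prop
          rw [← lintegral_const_mul _ m1, ← lintegral_const_mul _ (m1.const_mul _)]
          apply lintegral_congr; intro r
          ring
        · exact ((ENNReal.measurable_ofReal.comp measurable_fst).mul mk).aemeasurable
    · exact ENNReal.ofReal_ne_top
  · exact ((ENNReal.measurable_ofReal.mul mG).comp measurable_fst).aemeasurable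

lemma mem_DD_iff (a h : ℝ) : ((⟨a, h⟩ : ℂ) ∈ DD) ↔ a ^ 2 + h ^ 2 ≤ 1 := by
  simp only [DD, mem_closedBall_zero_iff]
  rw [← abs_norm, ← sq_le_one_iff_abs_le_one, ← Complex.normSq_eq_norm_sq, Complex.normSq_mk]
  ring_nf

lemma mem_DD_iff' (a h : ℝ) : ((⟨a, h⟩ : ℂ) ∈ DD) ↔ h ∈ Icc (-1 : ℝ) 1 ∧ a ∈ Icc (-√(1 - h^2)) (√(1 - h^2)) := by
  rw [mem_DD_iff]
  constructor
  · intro H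
    refine ⟨?_, ?_⟩
    · rw [mem_Icc, ← abs_le, ← sq_le_one_iff_abs_le_one]; nlinarith
    · rw [mem_Icc, ← abs_le]; apply Real.abs_le_sqrt; linarith
  · rintro ⟨h1, h2⟩
    rw [mem_Icc, ← abs_le, ← sq_le_one_iff_abs_le_one] at h1
    rw [mem_Icc, ← abs_le] at h2
    have := sq_le_sq' (by linarith [abs_nonneg a, Real.sqrt_nonneg (1 - h^2)]) h2
    rw [sq_abs, Real.sq_sqrt (by linarith)] at this
    linarith

lemma lint_Icc {f : ℝ → ℝ} (hf : Continuous f) {a b : ℝ} (hab : a ≤ b) (h0 : ∀ x ∈ Icc a b, 0 ≤ f x) :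
    ∫⁻ x in Icc a b, ENNReal.ofReal (f x) = ENNReal.ofReal (∫ x in a..b, f x) := by
  rw [intervalIntegral.integral_of_le hab, ← integral_Icc_eq_integral_Ioc, ofReal_integral_eq_lintegral_ofReal]
  · exact hf.continuousOn.integrableOn_Icc
  · exact (ae_restrict_iff' measurableSet_Icc).2 (Filter.Eventually.of_forall h0)

lemma bp_r (a h : ℝ) (hD : (⟨a, h⟩ : ℂ) ∈ DD) :
    ∫⁻ r : ℝ in Ioi 0, ENNReal.ofReal r * ii ((⟨a, h⟩ : ℂ) + r) = ENNReal.ofReal ((√(1 - h^2) - a)^2 / 2) := by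
  have hD' := (mem_DD_iff' a h).1 hD
  set w := √(1 - h^2)
  have : ∀ r ∈ Ioi (0:ℝ), ENNReal.ofReal r * ii ((⟨a, h⟩ : ℂ) + r) = 
      (Icc 0 (w - a)).indicator (fun r => ENNReal.ofReal r) r := by
    intro r hr
    have e : (⟨a, h⟩ : ℂ) + r = ⟨a + r, h⟩ := by apply Complex.ext <;> simp
    have hiff : (⟨a + r, h⟩ : ℂ) ∈ DD ↔ r ∈ Icc 0 (w - a) := by
      rw [mem_DD_iff']
      have : 0 < r := hr
      constructor
      · rintro ⟨_, h1, h2⟩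
        exact ⟨this.le, by linarith⟩
      · rintro ⟨_, h1⟩
        exact ⟨hD'.1, by linarith [hD'.2.1], by linarith⟩
    rw [e]
    by_cases hm : r ∈ Icc 0 (w - a)
    · rw [indicator_of_mem hm, ii, indicator_of_mem (hiff.2 hm)]; simp
    · rw [indicator_of_notMem hm, ii, indicator_of_notMem (fun h' => hm (hiff.1 h'))]; simp
  rw [setLIntegral_congr_fun measurableSet_Ioi this, Measure.restrict_congr_set Ioi_ae_eq_Ici, 
    setLIntegral_indicator measurableSet_Icc, inter_eq_left.2 (fun x hx => hx.1),
    lint_Icc (f := fun x => x) continuous_id (by linarith [hD'.2.2]) (fun x hx => hx.1)]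
  simp

lemma bp4 (F : ℝ → ENNReal) (hF : Measurable F) :
    ∫⁻ y in DD, ∫⁻ a in DD, F (hh y a) =
      ENNReal.ofReal (2 * π) * ∫⁻ h : ℝ in Icc (-1) 1, F |h| * ENNReal.ofReal (4 / 3 * √(1 - h^2) ^ 3) := by
  rw [bp3 F hF]
  congr 1
  have h1 : ∀ y : ℂ, ii y * (F |y.im| * ∫⁻ r : ℝ in Ioi 0, ENNReal.ofReal r * ii (y + r)) =
      ii y * (F |y.im| * ENNReal.ofReal ((√(1 - y.im^2) - y.re)^2 / 2)) := by
    rintro ⟨a, h⟩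
    by_cases hD : (⟨a, h⟩ : ℂ) ∈ DD
    · rw [bp_r a h hD]
    · rw [ii, indicator_of_notMem hD, zero_mul, zero_mul]
  simp_rw [h1]
  have mm : Measurable fun y : ℂ => ii y * (F |y.im| * ENNReal.ofReal ((√(1 - y.im^2) - y.re)^2 / 2)) := by
    refine measurable_ii.mul ((hF.comp Complex.measurable_im.abs).mul (ENNReal.measurable_ofReal.comp ?_))
    apply Continuous.measurable
    fun_prop
  rw [← (Complex.volume_preserving_equiv_real_prod.symm).lintegral_comp mm, Measure.volume_eq_prod,
    lintegral_prod_symm]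
  · rw [← lintegral_indicator measurableSet_Icc]
    apply lintegral_congr; intro h
    have e : ∀ a, (Complex.measurableEquivRealProd.symm (a, h)) = (⟨a, h⟩ : ℂ) := fun a => rfl
    simp only [e]
    by_cases hh : h ∈ Icc (-1 : ℝ) 1
    · rw [indicator_of_mem hh]
      set w := √(1 - h^2)
      have hw : 0 ≤ w := Real.sqrt_nonneg _
      have : ∀ a : ℝ, ii ⟨a, h⟩ * (F |h| * ENNReal.ofReal ((w - a)^2 / 2)) = 
          (Icc (-w) w).indicator (fun a => F |h| * ENNReal.ofReal ((w - a)^2 / 2)) a := by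
        intro a
        by_cases hm : a ∈ Icc (-w) w
        · rw [indicator_of_mem hm, ii, indicator_of_mem ((mem_DD_iff' a h).2 ⟨hh, hm⟩)]; simp
        · rw [indicator_of_notMem hm, ii, indicator_of_notMem (fun h' => hm ((mem_DD_iff' a h).1 h').2)]; simp
      simp_rw [this]
      have hc : Continuous fun a : ℝ => (w - a)^2 / 2 := by fun_prop
      rw [lintegral_indicator measurableSet_Icc, lintegral_const_mul _ hc.measurable.ennreal_ofReal,
        lint_Icc hc (by linarith) (fun x _ => by positivity)]
      congr 2
      rw [intervalIntegral.integral_div, intervalIntegral.integral_comp_sub_left (fun x => x^2) w]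
      simp; ring
    · rw [indicator_of_notMem hh]
      rw [lintegral_eq_zero_of_ae_eq_zero]
      apply Filter.Eventually.of_forall
      intro a
      simp only [ii]
      rw [indicator_of_notMem (fun h' => hh ((mem_DD_iff' a h).1 h').1)]; simp
  · exact (mm.comp Complex.measurableEquivRealProd.symm.measurable).aemeasurable


lemma SS_eq {h : ℝ} (h0 : 0 ≤ h) (h1 : h ≤ 1) :
    SS h = ENNReal.ofReal (∫ u in (-h)..h, 2 * √(1 - u^2)) := by
  have hm : MeasurableSet {w : ℂ | w ∈ DD ∧ |w.im| ≤ h} :=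
    measurableSet_DD.inter (measurableSet_le Complex.measurable_im.abs measurable_const)
  rw [SS, ← Complex.volume_preserving_equiv_real_prod.symm.measure_preimage_equiv,
    Measure.volume_eq_prod, Measure.prod_apply_symm (Complex.measurableEquivRealProd.symm.measurable hm),
    ← lint_Icc (by fun_prop) (by linarith) (fun x _ => by positivity),
    ← lintegral_indicator measurableSet_Icc]
  apply lintegral_congr; intro u
  have e : ∀ a, (Complex.measurableEquivRealProd.symm (a, u)) = (⟨a, u⟩ : ℂ) := fun a => rfl
  by_cases hu : u ∈ Icc (-h) h
  · rw [indicator_of_mem hu]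
    have : (fun x => (x, u)) ⁻¹' (Complex.measurableEquivRealProd.symm ⁻¹' {w : ℂ | w ∈ DD ∧ |w.im| ≤ h}) 
        = Icc (-√(1 - u^2)) (√(1 - u^2)) := by
      ext a
      simp only [mem_preimage, mem_setOf_eq, e, mem_DD_iff']
      constructor
      · exact fun H => H.1.2
      · exact fun H => ⟨⟨⟨by linarith [hu.1], by linarith [hu.2]⟩, H⟩, abs_le.2 hu⟩
    rw [this, Real.volume_Icc]; congr 1; ring
  · rw [indicator_of_notMem hu]
    have : (fun x => (x, u)) ⁻¹' (Complex.measurableEquivRealProd.symm ⁻¹' {w : ℂ | w ∈ DD ∧ |w.im| ≤ h}) 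
        = ∅ := by
      ext a
      simp only [mem_preimage, mem_setOf_eq, e, mem_empty_iff_false, iff_false]
      exact fun H => hu (abs_le.1 H.2)
    rw [this, measure_empty]

lemma SS_sin {s : ℝ} (h0 : 0 ≤ s) (h1 : s ≤ π / 2) :
    SS (Real.sin s) = ENNReal.ofReal (2 * s + Real.sin (2 * s)) := by
  rw [SS_eq (Real.sin_nonneg_of_nonneg_of_le_pi h0 (by linarith [Real.pi_pos])) (Real.sin_le_one s)]
  congr 1
  rw [← Real.sin_neg, ← intervalIntegral.integral_comp_mul_deriv (f := Real.sin) (f' := Real.cos)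
    (fun x _ => Real.hasDerivAt_sin x) Real.continuous_cos.continuousOn (by fun_prop)]
  have : ∀ x ∈ uIcc (-s) s, ((fun u : ℝ => 2 * √(1 - u^2)) ∘ Real.sin) x * Real.cos x = 1 + Real.cos (2 * x) := by
    intro x hx
    rw [uIcc_of_le (by linarith)] at hx
    have hc : 0 ≤ Real.cos x := Real.cos_nonneg_of_mem_Icc ⟨by linarith [hx.1], by linarith [hx.2]⟩
    simp only [Function.comp]
    rw [← Real.cos_sq', Real.sqrt_sq hc, Real.cos_two_mul]; ring
  rw [intervalIntegral.integral_congr this, intervalIntegral.integral_add (by simp) 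
    (Continuous.intervalIntegrable (by fun_prop) _ _)]
  simp [intervalIntegral.integral_comp_mul_left (fun x => Real.cos x)]
  ring

/-- the integral in the statement -/
def II (M : ℕ) : ℝ := ∫ t in (0 : ℝ)..π, (t + Real.sin t) ^ M * (1 + Real.cos t) ^ 2

lemma J_eq (M : ℕ) : ∫⁻ y in DD, ∫⁻ a in DD, SS (hh y a) ^ M = ENNReal.ofReal (2 * π / 3 * II M) := by
  rw [bp4 (fun h => SS h ^ M) (measurable_SS.pow_const M)]
  let k : ℝ → ℝ := fun h => (2 * Real.arcsin |h| + Real.sin (2 * Real.arcsin |h|)) ^ M * (4 / 3 * √(1 - h^2) ^ 3)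
  have hk : Continuous k := by
    have : Continuous Real.arcsin := Real.continuous_arcsin
    fun_prop
  have hnn : ∀ h : ℝ, |h| ≤ 1 → 0 ≤ 2 * Real.arcsin |h| + Real.sin (2 * Real.arcsin |h|) := by
    intro h hh
    have h1 : 0 ≤ Real.arcsin |h| := Real.arcsin_nonneg.2 (abs_nonneg h)
    have h2 := Real.arcsin_le_pi_div_two |h|
    have := Real.sin_nonneg_of_nonneg_of_le_pi (x := 2 * Real.arcsin |h|) (by linarith) (by linarith)
    linarith
  have h1 : ∀ h ∈ Icc (-1 : ℝ) 1, SS |h| ^ M * ENNReal.ofReal (4 / 3 * √(1 - h^2) ^ 3) = ENNReal.ofReal (k h) := by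
    intro h hh
    have hh' : |h| ≤ 1 := abs_le.2 hh
    have e : |h| = Real.sin (Real.arcsin |h|) := (Real.sin_arcsin (by linarith [abs_nonneg h]) hh').symm
    conv_lhs => rw [e]
    rw [SS_sin (Real.arcsin_nonneg.2 (abs_nonneg h)) (Real.arcsin_le_pi_div_two _), 
      ← ENNReal.ofReal_pow (hnn h hh'), ← ENNReal.ofReal_mul (pow_nonneg (hnn h hh') _)]
  rw [setLIntegral_congr_fun measurableSet_Icc h1, lint_Icc hk (by norm_num) 
    (fun h hh => mul_nonneg (pow_nonneg (hnn h (abs_le.2 hh)) _) (by positivity)),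
    ← ENNReal.ofReal_mul (by positivity)]
  congr 1
  have s1 : ∫ x in (-1 : ℝ)..1, k x = 2 * ∫ x in (0 : ℝ)..1, k x := by
    rw [← intervalIntegral.integral_add_adjacent_intervals (hk.intervalIntegrable (-1) 0) (hk.intervalIntegrable 0 1)]
    have : ∫ x in (-1 : ℝ)..0, k x = ∫ x in (0 : ℝ)..1, k x := by
      have := intervalIntegral.integral_comp_neg (a := 0) (b := 1) k
      rw [neg_zero] at this
      rw [← this]
      apply intervalIntegral.integral_congr
      intro x _
      simp [k]
    rw [this]; ring
  have s2 : ∫ x in (0 : ℝ)..1, k x = ∫ s in (0 : ℝ)..(π / 2), (1 / 3) * ((2 * s + Real.sin (2 * s)) ^ M * (1 + Real.cos (2 * s)) ^ 2) := by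
    have := intervalIntegral.integral_comp_mul_deriv (a := 0) (b := π / 2) (f := Real.sin) (f' := Real.cos) 
      (fun x _ => Real.hasDerivAt_sin x) Real.continuous_cos.continuousOn hk
    rw [Real.sin_zero, Real.sin_pi_div_two] at this
    rw [← this]
    apply intervalIntegral.integral_congr
    intro s hs
    rw [uIcc_of_le (by positivity)] at hs
    have hc : 0 ≤ Real.cos s := Real.cos_nonneg_of_mem_Icc ⟨by linarith [hs.1, Real.pi_pos], by linarith [hs.2]⟩
    have hsn : 0 ≤ Real.sin s := Real.sin_nonneg_of_nonneg_of_le_pi hs.1 (by linarith [hs.2, Real.pi_pos])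
    simp only [Function.comp, k]
    rw [abs_of_nonneg hsn, Real.arcsin_sin (by linarith [hs.1, Real.pi_pos]) hs.2, ← Real.cos_sq', Real.sqrt_sq hc, 
      Real.cos_two_mul]
    ring
  have s3 : II M = 2 * ∫ s in (0 : ℝ)..(π / 2), (2 * s + Real.sin (2 * s)) ^ M * (1 + Real.cos (2 * s)) ^ 2 := by
    rw [intervalIntegral.mul_integral_comp_mul_left (f := fun t => (t + Real.sin t) ^ M * (1 + Real.cos t) ^ 2), II]
    congr 1 <;> ring
  rw [s1, s2, s3, intervalIntegral.integral_const_mul]; ring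

lemma vol_DD : volume DD = ENNReal.ofReal π := by
  rw [DD, Complex.volume_closedBall]; simp
  rw [← ENNReal.ofReal_coe_nnreal]; rfl

lemma vol_DN (N : ℕ) : volume (DN N) = ENNReal.ofReal (π ^ N) := by
  have : DN N = Set.univ.pi fun _ => DD := by ext; simp [DN]
  rw [this, volume_pi_pi]; simp [vol_DD, ENNReal.ofReal_pow Real.pi_pos.le]

lemma II_nonneg (M : ℕ) : 0 ≤ II M := by
  apply intervalIntegral.integral_nonneg Real.pi_pos.le
  intro t ht
  have := Real.sin_nonneg_of_nonneg_of_le_pi ht.1 ht.2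
  have := ht.1
  positivity

lemma expect_eq (M : ℕ) : ∫ x in DN (M + 1), (volume (PP x)).toReal / π =
    π ^ (M + 1) - (M + 1 : ℕ) * (2 / 3) * II M := by
  have hlin : ∫⁻ x in DN (M + 1), volume (DD \ PP x) = ENNReal.ofReal ((M + 1 : ℕ) * (2 * π / 3 * II M)) := by
    rw [total_volume', J_eq, ENNReal.ofReal_mul (p := ((M + 1 : ℕ) : ℝ)) (by positivity), ENNReal.ofReal_natCast]
  have hmeas : AEMeasurable (fun x : Fin (M + 1) → ℂ => volume (DD \ PP x)) (volume.restrict (DN (M + 1))) := by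
    refine ⟨fun x => ∑ i, ∫⁻ y in DD, (BB i).indicator 1 (x, y), ?_, ae_restrict_of_ae (ae_indicator (Nat.succ_pos M))⟩
    refine Finset.measurable_fun_sum _ fun i _ => ?_
    exact (measurable_one.indicator (measurableSet_BB i)).lintegral_prod_right'
  have hlt : ∀ x : Fin (M + 1) → ℂ, volume (DD \ PP x) < ⊤ := fun x => 
    (measure_mono diff_subset).trans_lt (by rw [vol_DD]; exact ENNReal.ofReal_lt_top)
  have hint : ∫ x in DN (M + 1), (volume (DD \ PP x)).toReal = (M + 1 : ℕ) * (2 * π / 3 * II M) := by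
    rw [integral_toReal hmeas (Filter.Eventually.of_forall hlt), hlin, ENNReal.toReal_ofReal]
    have := II_nonneg M
    positivity
  have hI : Integrable (fun x : Fin (M + 1) → ℂ => (volume (DD \ PP x)).toReal) (volume.restrict (DN (M + 1))) := by
    apply integrable_toReal_of_lintegral_ne_top hmeas
    rw [hlin]; exact ENNReal.ofReal_ne_top
  have hcongr : ∀ x ∈ DN (M + 1), (volume (PP x)).toReal / π = 1 - (volume (DD \ PP x)).toReal / π := by
    intro x hx
    have hsub : PP x ⊆ DD := by
      apply convexHull_min _ (convex_closedBall _ _)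
      rintro w (⟨j, rfl⟩ | ⟨j, hj⟩)
      · exact hx j
      · have : w = - x j := by rw [hj]; simp
        rw [this]
        have := hx j
        simpa [DD] using this
    have h1 : volume (PP x) ≠ ⊤ := ((measure_mono hsub).trans_lt (by rw [vol_DD]; exact ENNReal.ofReal_lt_top)).ne
    have h2 := measure_diff_add_inter (μ := volume) DD (PP_compact x).measurableSet
    rw [inter_eq_right.2 hsub] at h2
    have h3 := congrArg ENNReal.toReal h2
    rw [ENNReal.toReal_add (hlt x).ne h1, vol_DD, ENNReal.toReal_ofReal Real.pi_pos.le] at h3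
    have := Real.pi_pos
    field_simp
    linarith
  rw [setIntegral_congr_fun (measurableSet_DN _) hcongr, integral_sub _ (hI.div_const _), integral_div, hint]
  · simp only [integral_const, measureReal_def, Measure.restrict_apply_univ, vol_DN, smul_eq_mul, mul_one]
    rw [ENNReal.toReal_ofReal (by positivity)]
    have := Real.pi_pos
    field_simp
  · rw [integrable_const_iff]
    right
    constructor
    rw [Measure.restrict_apply_univ, vol_DN]; exact ENNReal.ofReal_lt_top
lemma II_one : II 1 = 3 * π ^ 2 / 4 - 4 / 3 := by
  have h : ∀ t ∈ uIcc (0 : ℝ) π, HasDerivAt (fun t : ℝ => 3 * t ^ 2 / 4 + 2 * (t * Real.sin t) + 2 * Real.cos t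
      + t * (Real.sin t * Real.cos t) / 2 + Real.cos t ^ 2 / 4 - (1 + Real.cos t) ^ 3 / 3)
      ((t + Real.sin t) ^ 1 * (1 + Real.cos t) ^ 2) t := by
    intro t _
    have hs := Real.hasDerivAt_sin t
    have hc := Real.hasDerivAt_cos t
    have ht := hasDerivAt_id' t
    have := ((((((((ht.pow 2).const_mul 3).div_const 4).add ((ht.mul hs).const_mul 2)).add (hc.const_mul 2)).add
      ((ht.mul (hs.mul hc)).div_const 2)).add ((hc.pow 2).div_const 4)).sub (((hc.const_add 1).pow 3).div_const 3))
    refine HasDerivAt.congr_deriv this ?_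
    have h1 := Real.sin_sq_add_cos_sq t
    simp only [Pi.mul_apply, Pi.pow_apply]
    push_cast
    grind
  rw [II, intervalIntegral.integral_eq_sub_of_hasDerivAt h (Continuous.intervalIntegrable (by fun_prop) _ _)]
  simp
  ring

lemma II_two : II 2 = π ^ 3 / 2 - 35 * π / 24 := by
  have h : ∀ t ∈ uIcc (0 : ℝ) π, HasDerivAt (fun t : ℝ => t ^ 3 / 2 + 2 * (t ^ 2 * Real.sin t) + 4 * (t * Real.cos t)
      - 4 * Real.sin t + t ^ 2 * (Real.sin t * Real.cos t) / 2 + t * (2 * Real.cos t ^ 2 - 1) / 4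
      - Real.sin t * Real.cos t / 4 - 2 / 3 * (t * (1 + Real.cos t) ^ 3)
      + 2 / 3 * (5 / 2 * t + 4 * Real.sin t + 3 / 2 * (Real.sin t * Real.cos t) - Real.sin t ^ 3 / 3)
      + (5 / 8 * t - Real.sin t * Real.cos t / 2 + 2 / 3 * Real.sin t ^ 3
      - Real.sin t * Real.cos t * (2 * Real.cos t ^ 2 - 1) / 8))
      ((t + Real.sin t) ^ 2 * (1 + Real.cos t) ^ 2) t := by
    intro t _
    have hs := Real.hasDerivAt_sin t
    have hc := Real.hasDerivAt_cos t
    have ht := hasDerivAt_id' t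
    have h2 := ((hc.pow 2).const_mul 2).sub_const 1
    have := (((((((((((ht.pow 3).div_const 2).add (((ht.pow 2).mul hs).const_mul 2)).add ((ht.mul hc).const_mul 4)).sub
      (hs.const_mul 4)).add (((ht.pow 2).mul (hs.mul hc)).div_const 2)).add ((ht.mul h2).div_const 4)).sub
      ((hs.mul hc).div_const 4)).sub ((ht.mul ((hc.const_add 1).pow 3)).const_mul (2 / 3))).add
      (((((ht.const_mul (5 / 2)).add (hs.const_mul 4)).add ((hs.mul hc).const_mul (3 / 2))).sub ((hs.pow 3).div_const 3)).const_mul (2 / 3))).add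
      ((((ht.const_mul (5 / 8)).sub ((hs.mul hc).div_const 2)).add ((hs.pow 3).const_mul (2 / 3))).sub (((hs.mul hc).mul h2).div_const 8)))
    refine HasDerivAt.congr_deriv this ?_
    have h1 := Real.sin_sq_add_cos_sq t
    simp only [Pi.mul_apply, Pi.pow_apply]
    push_cast
    grind
  rw [II, intervalIntegral.integral_eq_sub_of_hasDerivAt h (Continuous.intervalIntegrable (by fun_prop) _ _)]
  simp
  ring

lemma momentV_eq (N : ℕ) : momentV 2 N (Metric.closedBall (0 : EuclideanSpace ℝ (Fin 2)) 1) 1 =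
    (∫ x in DN N, (volume (PP x)).toReal / π) / π ^ N := by
  let e : ℂ ≃ₗᵢ[ℝ] EuclideanSpace ℝ (Fin 2) := Complex.orthonormalBasisOneI.repr
  have he : MeasurePreserving e volume volume := e.measurePreserving
  have hem : MeasurableEmbedding e := e.toHomeomorph.measurableEmbedding
  let em : ℂ ≃ᵐ EuclideanSpace ℝ (Fin 2) := e.toHomeomorph.toMeasurableEquiv
  let φ : (Fin N → ℂ) ≃ᵐ (Fin N → EuclideanSpace ℝ (Fin 2)) := MeasurableEquiv.piCongrRight fun _ => em
  have hφ : MeasurePreserving φ volume volume := 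
    volume_preserving_pi (f := fun _ : Fin N => (e : ℂ → EuclideanSpace ℝ (Fin 2))) fun _ => he
  have hv : (volume (Metric.closedBall (0 : EuclideanSpace ℝ (Fin 2)) 1)).toReal = π := by
    rw [EuclideanSpace.volume_closedBall_fin_two]
    simp [Real.pi_pos.le]
  rw [momentV, hv, ← hφ.setIntegral_preimage_emb φ.measurableEmbedding]
  have hset : φ ⁻¹' {x | ∀ i, x i ∈ Metric.closedBall (0 : EuclideanSpace ℝ (Fin 2)) 1} = DN N := by
    ext x
    have : ∀ i, φ x i = e (x i) := fun i => rfl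
    simp [DN, DD, this]
  have hvol : ∀ x : Fin N → ℂ, volume (convexHull ℝ (range (φ x) ∪ -range (φ x))) = volume (PP x) := by
    intro x
    have h1 : φ x = e ∘ x := rfl
    have h2 : e.symm '' (convexHull ℝ (range (φ x) ∪ -range (φ x))) = PP x := by
      have := e.symm.toLinearEquiv.toLinearMap.image_convexHull (range (φ x) ∪ -range (φ x))
      refine Eq.trans this ?_
      unfold PP
      congr 1
      ext w
      simp only [mem_image, mem_union, mem_range, mem_neg, h1]
      constructor
      · rintro ⟨z, (⟨j, rfl⟩ | ⟨j, hj⟩), rfl⟩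
        · left; exact ⟨j, by simp⟩
        · right; refine ⟨j, ?_⟩
          have : z = - e (x j) := by rw [← neg_eq_iff_eq_neg]; exact hj.symm
          rw [this]; simp
      · rintro (⟨j, rfl⟩ | ⟨j, hj⟩)
        · exact ⟨e (x j), Or.inl ⟨j, rfl⟩, by simp⟩
        · exact ⟨e w, Or.inr ⟨j, by simp [hj]⟩, by simp⟩
    rw [← h2, e.symm.image_eq_preimage_symm, e.symm_symm]
    exact (he.measure_preimage_emb hem _).symm
  simp only [hset, hvol, Real.rpow_one]

lemma momentV_main (M : ℕ) : momentV 2 (M + 1) (Metric.closedBall (0 : EuclideanSpace ℝ (Fin 2)) 1) 1 =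
    1 - (2 * ((M + 1 : ℕ) : ℝ) / (3 * π ^ (M + 1))) * II M := by
  rw [momentV_eq, expect_eq]
  have := Real.pi_pos
  field_simp

/-- For every integer `N ≥ 2`,
`𝔼 V_{ℰ²,N} = 1 − (2N/(3π^N)) ∫₀^π (t + sin t)^{N−1} (1 + cos t)² dt`, where `ℰ²` is the
closed unit disc in `ℝ²`; in particular `𝔼 V_{ℰ²,2} = 16/(9π²)` and
`𝔼 V_{ℰ²,3} = 35/(12π²)`. -/
theorem momentV_disc_formula (N : ℕ) (hN : 2 ≤ N) :
    (momentV 2 N (Metric.closedBall (0 : EuclideanSpace ℝ (Fin 2)) 1) 1 =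
      1 - (2 * N / (3 * π ^ N)) *
        ∫ t in (0 : ℝ)..π, (t + Real.sin t) ^ (N - 1) * (1 + Real.cos t) ^ 2) ∧
    momentV 2 2 (Metric.closedBall (0 : EuclideanSpace ℝ (Fin 2)) 1) 1 = 16 / (9 * π ^ 2) ∧
    momentV 2 3 (Metric.closedBall (0 : EuclideanSpace ℝ (Fin 2)) 1) 1 = 35 / (12 * π ^ 2) := by

  refine ⟨?_, ?_, ?_⟩
  · obtain ⟨M, rfl⟩ : ∃ M, N = M + 1 := ⟨N - 1, by omega⟩
    exact momentV_main M
  · rw [momentV_main 1, II_one]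
    have := Real.pi_pos
    push_cast
    field_simp
    ring
  · rw [momentV_main 2, II_two]
    have := Real.pi_pos
    push_cast
    field_simp
    ring
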